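/- Let n ≥ 1 be a natural number, let α ∈ (4n−1, 4n+1), set ν = (1−α)/2, and let λ satisfy 0 < λ < j_{ν,1}². Then for all real numbers r, s₀ with 0 < r ≤ s₀ ≤ 1, J_{−ν}(s₀·√λ)·J_{ν−1}(r·√λ) + J_ν(s₀·√λ)·J_{1−ν}(r·√λ) ≥ 0. -/

import Mathlib

/-- The Bessel function of the first kind of real order `μ`. -/
noncomputable def besselJ (μ x : ℝ) : ℝ :=
  ∑' m : ℕ, ((-1 : ℝ) ^ m / ((m.factorial : ℝ) * Real.Gamma ((m : ℝ) + μ + 1))) *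
    (x / 2) ^ (2 * (m : ℝ) + μ)

/-!
Write `J_μ(x) = (x/2)^μ C_μ(-x²/4)` with the entire Bessel–Clifford function `C_μ`. The contiguity
relation and `C_μ' = C_{μ+1}` give the derivative rules for `J_μ` and the cross-product identity
`J_{-ν} J_{ν-1} + J_ν J_{1-ν} = 2 / (x Γ(ν) Γ(1-ν))`. The latter is `-J_ν²` times the derivative of
`J_{-ν} / J_ν`, so for `ν < 1` the function `Γ(ν) J_{-ν} / J_ν` decreases wherever `J_ν` has no
zero. Eliminating `J_{1-ν}(x)` by the cross-product identity gives
`J_ν(x) (J_{-ν}(y) J_{ν-1}(x) + J_ν(y) J_{1-ν}(x))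
  = J_{ν-1}(x) (J_{-ν}(y) J_ν(x) - J_ν(y) J_{-ν}(x)) + 2 J_ν(y) / (x Γ(ν) Γ(1-ν))`,
and for `ν < 0` and `x ≤ y` all signs on the right are known: `Γ(ν+1) J_ν` and `Γ(ν) J_{ν-1}` are
positive near `0` and stay so up to the first zero of `J_ν`.
-/

open Set

lemma hasDerivAt_tsum_mul_pow {a : ℕ → ℝ}
    (ha : ∀ z : ℝ, Summable fun m : ℕ ↦ ((m : ℝ) + 1) * a (m + 1) * z ^ m) (z : ℝ) :
    HasDerivAt (fun w ↦ ∑' m : ℕ, a m * w ^ m) (∑' m : ℕ, ((m : ℝ) + 1) * a (m + 1) * z ^ m) z := by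
  set R := |z| + 1
  have termwise_deriv_succ (w : ℝ) (m : ℕ) :
      a (m + 1) * (((m + 1 : ℕ) : ℝ) * w ^ (m + 1 - 1)) = ((m : ℝ) + 1) * a (m + 1) * w ^ m := by
    rw [Nat.add_sub_cancel]
    push_cast
    ring
  have summable_deriv (w : ℝ) : Summable fun m : ℕ ↦ a m * ((m : ℝ) * w ^ (m - 1)) :=
    (summable_nat_add_iff 1).1 ((ha w).congr fun m ↦ (termwise_deriv_succ w m).symm)
  have deriv_bound (m : ℕ) (w : ℝ) (hw : w ∈ Metric.ball (0 : ℝ) R) :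
      ‖a m * ((m : ℝ) * w ^ (m - 1))‖ ≤ ‖a m * ((m : ℝ) * R ^ (m - 1))‖ := by
    have hwR : ‖w‖ ≤ ‖R‖ := (mem_ball_zero_iff.1 hw).le.trans (Real.le_norm_self R)
    simp only [norm_mul, norm_pow]
    gcongr
  have zero_mem_ball : (0 : ℝ) ∈ Metric.ball (0 : ℝ) R := Metric.mem_ball_self (by positivity)
  have z_mem_ball : z ∈ Metric.ball (0 : ℝ) R := mem_ball_zero_iff.2 (lt_add_one |z|)
  have summable_at_zero : Summable fun m : ℕ ↦ a m * (0 : ℝ) ^ m :=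
    summable_of_ne_finset_zero (s := {0}) fun m hm ↦ by simp_all
  refine (hasDerivAt_tsum_of_isPreconnected (summable_deriv R).norm Metric.isOpen_ball
    (convex_ball 0 R).isPreconnected (fun m w _ ↦ (hasDerivAt_pow m w).const_mul (a m))
    deriv_bound zero_mem_ball summable_at_zero z_mem_ball).congr_deriv ?_
  rw [(summable_deriv z).tsum_eq_zero_add]
  simp only [termwise_deriv_succ, Nat.cast_zero, zero_mul, mul_zero, zero_add]

lemma inv_Gamma_eq_mul_inv_Gamma_add_one (s : ℝ) :
    (Real.Gamma s)⁻¹ = s * (Real.Gamma (s + 1))⁻¹ := by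
  rcases eq_or_ne s 0 with rfl | hs
  · simp
  · rw [Real.Gamma_add_one hs, mul_inv, mul_inv_cancel_left₀ hs]

lemma Gamma_pos_of_mem_Ioo_neg_two_mul (n : ℕ) {x : ℝ}
    (hx : x ∈ Ioo (-(2 * (n : ℝ))) (1 - 2 * n)) : 0 < Real.Gamma x := by
  induction n generalizing x with
  | zero => exact Real.Gamma_pos_of_pos (by simpa using hx.1)
  | succ n ih =>
    obtain ⟨hlower, hupper⟩ := hx
    push_cast at hlower hupper
    have x_add_one_neg : x + 1 < 0 := by linarith [n.cast_nonneg (α := ℝ)]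
    have x_neg : x < 0 := by linarith
    have hΓ : 0 < Real.Gamma (x + 1 + 1) := ih ⟨by linarith, by linarith⟩
    rw [Real.Gamma_add_one x_add_one_neg.ne, Real.Gamma_add_one x_neg.ne, ← mul_assoc] at hΓ
    exact pos_of_mul_pos_right hΓ (mul_pos_of_neg_of_neg x_add_one_neg x_neg).le

/-- The `m`-th Taylor coefficient at `0` of the Bessel–Clifford function of order `μ`. It vanishes
when `m + μ + 1` is a pole of the Gamma function, since `Real.Gamma` is `0` there. -/
noncomputable def besselCliffordCoeff (μ : ℝ) (m : ℕ) : ℝ :=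
  ((m.factorial : ℝ) * Real.Gamma (m + μ + 1))⁻¹

/-- The Bessel–Clifford function `C_μ(z) = ∑ zᵐ / (m! Γ(m + μ + 1))`, the entire function for which
`J_μ(x) = (x/2)^μ C_μ(-x²/4)`. -/
noncomputable def besselClifford (μ z : ℝ) : ℝ :=
  ∑' m : ℕ, besselCliffordCoeff μ m * z ^ m

lemma succ_mul_besselCliffordCoeff_succ (μ : ℝ) (m : ℕ) :
    ((m : ℝ) + 1) * besselCliffordCoeff μ (m + 1) = besselCliffordCoeff (μ + 1) m := by
  have hm : (m : ℝ) + 1 ≠ 0 := by positivity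
  simp only [besselCliffordCoeff, Nat.factorial_succ, Nat.cast_mul, Nat.cast_add, Nat.cast_one]
  rw [mul_assoc, mul_inv, mul_inv_cancel_left₀ hm, add_right_comm (m : ℝ) 1 μ, add_assoc (m : ℝ) μ]

lemma add_mul_besselCliffordCoeff (μ : ℝ) (m : ℕ) :
    ((m : ℝ) + μ) * besselCliffordCoeff μ m = besselCliffordCoeff (μ - 1) m := by
  rw [besselCliffordCoeff, besselCliffordCoeff, show (m : ℝ) + (μ - 1) + 1 = m + μ by ring,
    mul_inv, mul_inv, inv_Gamma_eq_mul_inv_Gamma_add_one (m + μ)]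
  ring

lemma summable_besselCliffordCoeff_mul_pow (μ z : ℝ) :
    Summable fun m : ℕ ↦ besselCliffordCoeff μ m * z ^ m := by
  have radius_eq_top : (Complex.regularizedHGFunSeries 0 {(μ : ℂ) + 1}).radius = ⊤ :=
    Complex.radius_regularizedHGFunSeries_eq_top (by simp)
  have z_mem_eball :
      (z : ℂ) ∈ Metric.eball 0 (Complex.regularizedHGFunSeries 0 {(μ : ℂ) + 1}).radius := by
    simp [radius_eq_top]
  rw [← Complex.summable_ofReal]
  refine (FormalMultilinearSeries.summable _ (x := (z : ℂ)) z_mem_eball).congr fun m ↦ ?_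
  simp only [FormalMultilinearSeries.apply_eq_pow_smul_coeff, Complex.regularizedHGFunSeries_coeff,
    Complex.regularizedHGFunCoeff, besselCliffordCoeff, Multiset.map_zero, Multiset.prod_zero,
    Multiset.map_singleton, Multiset.prod_singleton, smul_eq_mul, one_div]
  push_cast [← Complex.Gamma_ofReal]
  rw [mul_comm, add_right_comm, add_comm (μ : ℂ)]

lemma hasDerivAt_besselClifford (μ z : ℝ) :
    HasDerivAt (besselClifford μ) (besselClifford (μ + 1) z) z := by
  have h := hasDerivAt_tsum_mul_pow (a := besselCliffordCoeff μ)
  simp only [succ_mul_besselCliffordCoeff_succ] at h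
  exact h (summable_besselCliffordCoeff_mul_pow (μ + 1)) z

lemma besselClifford_zero_right (μ : ℝ) : besselClifford μ 0 = (Real.Gamma (μ + 1))⁻¹ := by
  rw [besselClifford, tsum_eq_single 0 fun m hm ↦ by simp [hm]]
  simp [besselCliffordCoeff]

lemma besselClifford_sub_one (μ z : ℝ) :
    besselClifford (μ - 1) z = μ * besselClifford μ z + z * besselClifford (μ + 1) z := by
  have hasSum (κ : ℝ) : HasSum (fun m : ℕ ↦ besselCliffordCoeff κ m * z ^ m) (besselClifford κ z) :=
    (summable_besselCliffordCoeff_mul_pow κ z).hasSum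
  have hasSum_index_mul :
      HasSum (fun m : ℕ ↦ (m : ℝ) * besselCliffordCoeff μ m * z ^ m)
        (z * besselClifford (μ + 1) z) := by
    rw [← hasSum_nat_add_iff' 1]
    simp only [Finset.sum_range_one, Nat.cast_zero, zero_mul, sub_zero, Nat.cast_add, Nat.cast_one,
      succ_mul_besselCliffordCoeff_succ]
    exact ((hasSum (μ + 1)).mul_left z).congr_fun fun m ↦ by ring
  refine (hasSum (μ - 1)).unique ((((hasSum μ).mul_left μ).add hasSum_index_mul).congr_fun ?_)
  intro m
  rw [← add_mul_besselCliffordCoeff]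
  ring

lemma besselClifford_cross_product (ν z : ℝ) :
    besselClifford (-ν) z * besselClifford (ν - 1) z
      - z * besselClifford (1 - ν) z * besselClifford ν z
      = (Real.Gamma ν * Real.Gamma (1 - ν))⁻¹ := by
  have hasDerivAt_zero (w : ℝ) : HasDerivAt
      (fun w ↦ besselClifford (-ν) w * besselClifford (ν - 1) w
        - w * besselClifford (1 - ν) w * besselClifford ν w) 0 w := by
    have contig_one_sub := besselClifford_sub_one (1 - ν) w
    have contig_self := besselClifford_sub_one ν w
    rw [sub_sub_cancel_left] at contig_one_sub
    refine (((hasDerivAt_besselClifford (-ν) w).mul (hasDerivAt_besselClifford (ν - 1) w)).sub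
      (((hasDerivAt_id w).mul (hasDerivAt_besselClifford (1 - ν) w)).mul
        (hasDerivAt_besselClifford ν w))).congr_deriv ?_
    rw [neg_add_eq_sub, sub_add_cancel, id_eq, contig_self, contig_one_sub, Pi.mul_apply, id_eq]
    ring
  have const_eq_zero_value := is_const_of_deriv_eq_zero
    (fun w ↦ (hasDerivAt_zero w).differentiableAt) (fun w ↦ (hasDerivAt_zero w).deriv) z 0
  simp only [besselClifford_zero_right, zero_mul, sub_zero, neg_add_eq_sub, sub_add_cancel]
    at const_eq_zero_value
  rw [const_eq_zero_value, mul_inv, mul_comm]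

lemma hasDerivAt_besselClifford_neg_sq (μ x : ℝ) :
    HasDerivAt (fun t ↦ besselClifford μ (-(t / 2) ^ 2))
      (-(x / 2) * besselClifford (μ + 1) (-(x / 2) ^ 2)) x := by
  have inner : HasDerivAt (fun t : ℝ ↦ -(t / 2) ^ 2) (-(x / 2)) x :=
    (((hasDerivAt_id x).div_const 2).pow 2).neg.congr_deriv (by
      simp only [Nat.cast_ofNat, id_eq, Nat.add_one_sub_one, pow_one]
      ring)
  exact ((hasDerivAt_besselClifford μ _).comp x inner).congr_deriv (mul_comm _ _)

lemma continuous_besselClifford_neg_sq (μ : ℝ) :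
    Continuous fun t : ℝ ↦ besselClifford μ (-(t / 2) ^ 2) :=
  continuous_iff_continuousAt.2 fun x ↦ (hasDerivAt_besselClifford_neg_sq μ x).continuousAt

section besselJ

variable {ν x y : ℝ}

lemma besselJ_eq_rpow_mul_besselClifford (μ : ℝ) (hx : 0 < x) :
    besselJ μ x = (x / 2) ^ μ * besselClifford μ (-(x / 2) ^ 2) := by
  rw [besselJ, besselClifford, ← tsum_mul_left]
  refine tsum_congr fun m ↦ ?_
  have rpow_index : (x / 2) ^ (2 * (m : ℝ) + μ) = ((x / 2) ^ 2) ^ m * (x / 2) ^ μ := by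
    rw [Real.rpow_add (half_pos hx), ← pow_mul]
    norm_cast
  rw [rpow_index, besselCliffordCoeff, neg_pow ((x / 2) ^ 2)]
  ring

lemma besselJ_sub_one_add_besselJ_add_one (μ : ℝ) (hx : 0 < x) :
    besselJ (μ - 1) x + besselJ (μ + 1) x = 2 * μ / x * besselJ μ x := by
  simp only [besselJ_eq_rpow_mul_besselClifford _ hx, Real.rpow_sub_one (half_pos hx).ne',
    Real.rpow_add_one (half_pos hx).ne', besselClifford_sub_one μ]
  field_simp
  ring

lemma hasDerivAt_besselJ_raising (μ : ℝ) (hx : 0 < x) :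
    HasDerivAt (besselJ μ) (μ / x * besselJ μ x - besselJ (μ + 1) x) x := by
  have rpow_deriv : HasDerivAt (fun t : ℝ ↦ (t / 2) ^ μ) (μ / x * (x / 2) ^ μ) x := by
    refine (((hasDerivAt_id x).div_const 2).rpow_const
      (Or.inl (half_pos hx).ne')).congr_deriv ?_
    rw [id_eq, Real.rpow_sub_one (half_pos hx).ne']
    field_simp
  refine HasDerivAt.congr_of_eventuallyEq
    ((rpow_deriv.mul (hasDerivAt_besselClifford_neg_sq μ x)).congr_deriv ?_)
    ((eventually_gt_nhds hx).mono fun t ht ↦ besselJ_eq_rpow_mul_besselClifford μ ht)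
  rw [besselJ_eq_rpow_mul_besselClifford _ hx, besselJ_eq_rpow_mul_besselClifford _ hx,
    Real.rpow_add_one (half_pos hx).ne']
  ring

lemma hasDerivAt_besselJ_lowering (μ : ℝ) (hx : 0 < x) :
    HasDerivAt (besselJ μ) (besselJ (μ - 1) x - μ / x * besselJ μ x) x :=
  (hasDerivAt_besselJ_raising μ hx).congr_deriv (by
    linear_combination -besselJ_sub_one_add_besselJ_add_one μ hx)

lemma besselJ_cross_product (ν : ℝ) (hx : 0 < x) :
    besselJ (-ν) x * besselJ (ν - 1) x + besselJ ν x * besselJ (1 - ν) x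
      = 2 / (x * Real.Gamma ν * Real.Gamma (1 - ν)) := by
  have hν : (x / 2) ^ ν ≠ 0 := (Real.rpow_pos_of_pos (half_pos hx) ν).ne'
  have clifford := besselClifford_cross_product ν (-(x / 2) ^ 2)
  simp only [besselJ_eq_rpow_mul_besselClifford _ hx, Real.rpow_sub_one (half_pos hx).ne',
    Real.rpow_neg (half_pos hx).le, Real.rpow_sub (half_pos hx), Real.rpow_one]
  rw [mul_assoc x, div_mul_eq_div_div, div_eq_mul_inv (2 / x), ← clifford]
  field_simp
  ring

lemma antitoneOn_Gamma_mul_besselJ_neg_div_besselJ {s : Set ℝ} (hν : ν < 1) (hs : Convex ℝ s)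
    (hs_pos : s ⊆ Ioi 0) (hzero : ∀ t ∈ s, besselJ ν t ≠ 0) :
    AntitoneOn (fun t ↦ Real.Gamma ν * (besselJ (-ν) t / besselJ ν t)) s := by
  have hasDerivAt_quotient (t : ℝ) (ht : t ∈ s) :
      HasDerivAt (fun t ↦ Real.Gamma ν * (besselJ (-ν) t / besselJ ν t))
        (Real.Gamma ν * (-(2 / (t * Real.Gamma ν * Real.Gamma (1 - ν))) / besselJ ν t ^ 2)) t := by
    refine (((hasDerivAt_besselJ_raising (-ν) (hs_pos ht)).div
      (hasDerivAt_besselJ_lowering ν (hs_pos ht)) (hzero t ht)).const_mul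
        (Real.Gamma ν)).congr_deriv ?_
    rw [← besselJ_cross_product ν (hs_pos ht), neg_add_eq_sub]
    ring
  refine antitoneOn_of_hasDerivWithinAt_nonpos hs
    (fun t ht ↦ (hasDerivAt_quotient t ht).continuousAt.continuousWithinAt)
    (fun t ht ↦ (hasDerivAt_quotient t (interior_subset ht)).hasDerivWithinAt) fun t ht ↦ ?_
  have ht_pos : 0 < t := hs_pos (interior_subset ht)
  have hΓ : 0 < Real.Gamma (1 - ν) := Real.Gamma_pos_of_pos (sub_pos.2 hν)
  have Gamma_div_self_nonneg : 0 ≤ Real.Gamma ν / Real.Gamma ν := by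
    rcases eq_or_ne (Real.Gamma ν) 0 with h | h <;> simp [h]
  calc Real.Gamma ν * (-(2 / (t * Real.Gamma ν * Real.Gamma (1 - ν))) / besselJ ν t ^ 2)
      = -(Real.Gamma ν / Real.Gamma ν * (2 / (t * Real.Gamma (1 - ν) * besselJ ν t ^ 2))) := by
        field_simp
    _ ≤ 0 := neg_nonpos.2 (mul_nonneg Gamma_div_self_nonneg (by positivity))

lemma Gamma_add_one_mul_besselJ_pos (hν : Real.Gamma (ν + 1) ≠ 0) (hx : 0 < x)
    (hzero : ∀ t ∈ Ioc 0 x, besselJ ν t ≠ 0) : 0 < Real.Gamma (ν + 1) * besselJ ν x := by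
  set f : ℝ → ℝ := fun t ↦ Real.Gamma (ν + 1) * besselClifford ν (-(t / 2) ^ 2)
  have f_zero : f 0 = 1 := by simp [f, besselClifford_zero_right, hν]
  have f_ne_zero (t : ℝ) (ht : t ∈ Icc 0 x) : f t ≠ 0 := by
    rcases ht.1.eq_or_lt with rfl | ht_pos
    · simp [f_zero]
    · have hJ := hzero t ⟨ht_pos, ht.2⟩
      rw [besselJ_eq_rpow_mul_besselClifford ν ht_pos] at hJ
      exact mul_ne_zero hν (right_ne_zero_of_mul hJ)
  have f_pos : 0 < f x := by
    by_contra! f_nonpos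
    obtain ⟨t, ht, ht_zero⟩ := intermediate_value_Icc' hx.le
      (continuous_const.mul (continuous_besselClifford_neg_sq ν)).continuousOn
      ⟨f_nonpos, f_zero.ge.trans' zero_le_one⟩
    exact f_ne_zero t ht ht_zero
  rw [besselJ_eq_rpow_mul_besselClifford ν hx, mul_left_comm]
  exact mul_pos (Real.rpow_pos_of_pos (half_pos hx) ν) f_pos

lemma Gamma_mul_besselJ_neg (hν : ν < 0) (hνΓ : Real.Gamma ν ≠ 0) (hx : 0 < x)
    (hzero : ∀ t ∈ Ioc 0 x, besselJ ν t ≠ 0) : Real.Gamma ν * besselJ ν x < 0 := by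
  have Gamma_succ : Real.Gamma (ν + 1) = ν * Real.Gamma ν := Real.Gamma_add_one hν.ne
  have h := Gamma_add_one_mul_besselJ_pos (Gamma_succ ▸ mul_ne_zero hν.ne hνΓ) hx hzero
  rw [Gamma_succ, mul_assoc] at h
  exact neg_of_mul_pos_right h hν.le

lemma Gamma_mul_besselJ_sub_one_pos (hν : ν < 0) (hνΓ : Real.Gamma ν ≠ 0) (hx : 0 < x)
    (hzero : ∀ t ∈ Ioc 0 x, besselJ ν t ≠ 0) : 0 < Real.Gamma ν * besselJ (ν - 1) x := by
  set f : ℝ → ℝ := fun t ↦ Real.Gamma ν * besselClifford (ν - 1) (-(t / 2) ^ 2)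
  have f_zero : f 0 = 1 := by simp [f, besselClifford_zero_right, hνΓ]
  have f_deriv_nonneg (t : ℝ) (ht : t ∈ Ioo 0 x) :
      0 ≤ Real.Gamma ν * (-(t / 2) * besselClifford ν (-(t / 2) ^ 2)) := by
    have hJ : Real.Gamma ν * besselJ ν t < 0 :=
      Gamma_mul_besselJ_neg hν hνΓ ht.1 fun u hu ↦ hzero u ⟨hu.1, hu.2.trans ht.2.le⟩
    rw [besselJ_eq_rpow_mul_besselClifford ν ht.1, mul_left_comm] at hJ
    have hC : Real.Gamma ν * besselClifford ν (-(t / 2) ^ 2) < 0 :=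
      neg_of_mul_neg_right hJ (Real.rpow_nonneg (half_pos ht.1).le ν)
    rw [mul_left_comm]
    exact mul_nonneg_of_nonpos_of_nonpos (neg_nonpos.2 (half_pos ht.1).le) hC.le
  have f_monotone : MonotoneOn f (Icc 0 x) := by
    refine monotoneOn_of_hasDerivWithinAt_nonneg (convex_Icc 0 x)
      (continuous_const.mul (continuous_besselClifford_neg_sq (ν - 1))).continuousOn
      (fun t _ ↦ ((hasDerivAt_besselClifford_neg_sq (ν - 1) t).const_mul _).hasDerivWithinAt) ?_
    simpa only [interior_Icc, sub_add_cancel] using f_deriv_nonneg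
  have f_pos : 0 < f x := zero_lt_one.trans_le <|
    f_zero.ge.trans (f_monotone (left_mem_Icc.2 hx.le) (right_mem_Icc.2 hx.le) hx.le)
  rw [besselJ_eq_rpow_mul_besselClifford (ν - 1) hx, mul_left_comm]
  exact mul_pos (Real.rpow_pos_of_pos (half_pos hx) _) f_pos

lemma Gamma_mul_besselJ_cross_difference_nonpos (hν : ν < 0) (hνΓ : Real.Gamma ν ≠ 0) (hx : 0 < x)
    (hxy : x ≤ y) (hzero : ∀ t ∈ Ioc 0 y, besselJ ν t ≠ 0) :
    Real.Gamma ν * (besselJ (-ν) y * besselJ ν x - besselJ ν y * besselJ (-ν) x) ≤ 0 := by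
  have hy : 0 < y := hx.trans_le hxy
  have hJx_ne : besselJ ν x ≠ 0 := hzero x ⟨hx, hxy⟩
  have hJy_ne : besselJ ν y ≠ 0 := hzero y (right_mem_Ioc.2 hy)
  have hJJ : 0 < besselJ ν x * besselJ ν y := by
    have h := mul_pos_of_neg_of_neg
      (Gamma_mul_besselJ_neg hν hνΓ hx fun t ht ↦ hzero t (Ioc_subset_Ioc_right hxy ht))
      (Gamma_mul_besselJ_neg hν hνΓ hy hzero)
    rw [mul_mul_mul_comm] at h
    exact pos_of_mul_pos_right h (mul_self_nonneg _)
  have quotient_le := antitoneOn_Gamma_mul_besselJ_neg_div_besselJ (hν.trans zero_lt_one)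
    (convex_Ioc 0 y) (fun t ht ↦ ht.1) hzero ⟨hx, hxy⟩ (right_mem_Ioc.2 hy) hxy
  calc Real.Gamma ν * (besselJ (-ν) y * besselJ ν x - besselJ ν y * besselJ (-ν) x)
      = (Real.Gamma ν * (besselJ (-ν) y / besselJ ν y)
          - Real.Gamma ν * (besselJ (-ν) x / besselJ ν x)) * (besselJ ν x * besselJ ν y) := by
        field_simp
    _ ≤ 0 := mul_nonpos_of_nonpos_of_nonneg (sub_nonpos.2 quotient_le) hJJ.le

theorem besselJ_derivative_combination_nonneg_general (hν : ν < 0) (hν_int : ∀ m : ℕ, ν ≠ -m)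
    (hx : 0 < x) (hxy : x ≤ y) (hzero : ∀ t ∈ Ioc 0 y, besselJ ν t ≠ 0) :
    0 < Real.Gamma ν * (besselJ (-ν) y * besselJ (ν - 1) x + besselJ ν y * besselJ (1 - ν) x) := by
  have hνΓ : Real.Gamma ν ≠ 0 := Real.Gamma_ne_zero hν_int
  have hzero_x : ∀ t ∈ Ioc 0 x, besselJ ν t ≠ 0 :=
    fun t ht ↦ hzero t (Ioc_subset_Ioc_right hxy ht)
  have hJx : Real.Gamma ν * besselJ ν x < 0 := Gamma_mul_besselJ_neg hν hνΓ hx hzero_x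
  have hJy : Real.Gamma ν * besselJ ν y < 0 :=
    Gamma_mul_besselJ_neg hν hνΓ (hx.trans_le hxy) hzero
  have hJ_sub_one : 0 < Real.Gamma ν * besselJ (ν - 1) x :=
    Gamma_mul_besselJ_sub_one_pos hν hνΓ hx hzero_x
  have hdiff := Gamma_mul_besselJ_cross_difference_nonpos hν hνΓ hx hxy hzero
  have hcross : Real.Gamma ν *
      (besselJ (-ν) x * besselJ (ν - 1) x + besselJ ν x * besselJ (1 - ν) x)
      = 2 / (x * Real.Gamma (1 - ν)) := by
    rw [besselJ_cross_product ν hx]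
    field_simp
  have hcross_pos : 0 < 2 / (x * Real.Gamma (1 - ν)) :=
    div_pos two_pos (mul_pos hx (Real.Gamma_pos_of_pos (by linarith)))
  refine pos_of_mul_neg_right ?_ hJx.le
  calc Real.Gamma ν * besselJ ν x * (Real.Gamma ν *
        (besselJ (-ν) y * besselJ (ν - 1) x + besselJ ν y * besselJ (1 - ν) x))
      = Real.Gamma ν * besselJ (ν - 1) x *
          (Real.Gamma ν * (besselJ (-ν) y * besselJ ν x - besselJ ν y * besselJ (-ν) x))
        + Real.Gamma ν * besselJ ν y * (2 / (x * Real.Gamma (1 - ν))) := by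
        rw [← hcross]
        ring
    _ < 0 := add_neg_of_nonpos_of_neg (mul_nonpos_of_nonneg_of_nonpos hJ_sub_one.le hdiff)
        (mul_neg_of_neg_of_pos hJy hcross_pos)

end besselJ

/-- **Key inequality for Lemma 3.2.** For `α ∈ (4n−1, 4n+1)`, `ν = (1−α)/2` and
`0 < λ < j²_{ν,1}`, one has
`J_{−ν}(s₀√λ)·J_{ν−1}(r√λ) + J_ν(s₀√λ)·J_{1−ν}(r√λ) ≥ 0` for `0 < r ≤ s₀ ≤ 1`. -/
theorem besselJ_derivative_combination_nonneg (n : ℕ) (hn : 1 ≤ n) (α lam ν : ℝ)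
    (hα1 : 4 * (n : ℝ) - 1 < α) (hα2 : α < 4 * (n : ℝ) + 1)
    (hν : ν = (1 - α) / 2)
    (hlam : 0 < lam)
    (hzero : ∀ t : ℝ, 0 < t → t ≤ Real.sqrt lam → besselJ ν t ≠ 0) :
    ∀ r s₀ : ℝ, 0 < r → r ≤ s₀ → s₀ ≤ 1 →
      0 ≤ besselJ (-ν) (s₀ * Real.sqrt lam) * besselJ (ν - 1) (r * Real.sqrt lam)
        + besselJ ν (s₀ * Real.sqrt lam) * besselJ (1 - ν) (r * Real.sqrt lam) := by
  intro r s₀ hr hrs hs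
  have hn_cast : (1 : ℝ) ≤ n := mod_cast hn
  have hsqrt : 0 < Real.sqrt lam := Real.sqrt_pos.2 hlam
  have hΓ : 0 < Real.Gamma ν :=
    Gamma_pos_of_mem_Ioo_neg_two_mul n ⟨by linarith, by linarith⟩
  have hν_int : ∀ m : ℕ, ν ≠ -m :=
    not_exists.1 ((Real.Gamma_eq_zero_iff ν).not.1 hΓ.ne')
  exact (pos_of_mul_pos_right (besselJ_derivative_combination_nonneg_general (by linarith) hν_int
    (mul_pos hr hsqrt) (mul_le_mul_of_nonneg_right hrs hsqrt.le)
    fun t ht ↦ hzero t ht.1 (ht.2.trans (mul_le_of_le_one_left hsqrt.le hs))) hΓ.le).le
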